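/- For every infinite partial order L, |L| ≤ 2^{μ(L)}. -/

import Mathlib

universe u v w

open Cardinal

/-- A well-ordered chain: a chain whose induced strict order is well-founded. -/
def IsWellChain {L : Type u} [PartialOrder L] (A : Set L) : Prop :=
  IsChain (· ≤ ·) A ∧ A.WellFoundedOn (· < ·)

/-- A co-well-ordered chain: a chain well-ordered under the reverse order. -/
def IsCoWellChain {L : Type u} [PartialOrder L] (A : Set L) : Prop :=
  IsChain (· ≤ ·) A ∧ A.WellFoundedOn (· > ·)

/-- A subset of a partial order is uniform if it is an antichain, a well-ordered chain,
or a co-well-ordered chain. -/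
def IsUniform {L : Type u} [PartialOrder L] (A : Set L) : Prop :=
  IsAntichain (· ≤ ·) A ∨ IsWellChain A ∨ IsCoWellChain A

/-- `mu L` is the least cardinal `m` such that `L` has no uniform subset of cardinality `m`. -/
noncomputable def mu (L : Type u) [PartialOrder L] : Cardinal.{u} :=
  sInf {m : Cardinal.{u} | ¬ ∃ A : Set L, IsUniform A ∧ #A = m}

/-- `nu2 L₁ L₂` is the least cardinal `n` such that there is no family of `n` pairwise
incomparable monotone functions from `L₁` to `L₂` (functions ordered pointwise). -/
noncomputable def nu2 (L₁ : Type u) (L₂ : Type v) [PartialOrder L₁] [PartialOrder L₂] :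
    Cardinal.{max u v} :=
  sInf {n : Cardinal.{max u v} |
    ¬ ∃ S : Set (L₁ → L₂), (∀ f ∈ S, Monotone f) ∧ IsAntichain (· ≤ ·) S ∧ #S = n}

/-- `nu L = nu2 L L`. -/
noncomputable def nu (L : Type u) [PartialOrder L] : Cardinal.{u} := nu2 L L

/-- `muInf L = sup_{n} mu (Lⁿ)` for `n ≥ 1`. -/
noncomputable def muInf (L : Type u) [PartialOrder L] : Cardinal.{u} :=
  ⨆ n : ℕ, mu (Fin (n + 1) → L)

/-- `nuInf L = sup_{n} nu (Lⁿ, L)` for `n ≥ 1`. -/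
noncomputable def nuInf (L : Type u) [PartialOrder L] : Cardinal.{u} :=
  ⨆ n : ℕ, nu2 (Fin (n + 1) → L) L

/-- A function `(Fin n → L) → L` is a polynomial function if it lies in the smallest
sublattice of the function lattice containing all coordinate projections and all
constant functions. -/
def IsPolynomialFn (L : Type u) [Lattice L] (n : ℕ) (f : (Fin n → L) → L) : Prop :=
  f ∈ latticeClosure ({g : (Fin n → L) → L | ∃ i : Fin n, g = fun x => x i} ∪
    {g : (Fin n → L) → L | ∃ c : L, g = fun _ => c})

/-- A lattice is order polynomially complete if for every `n ≥ 1` every monotone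
`n`-ary function is a polynomial function. -/
def OPC (L : Type u) [Lattice L] : Prop :=
  ∀ n : ℕ, 1 ≤ n → ∀ f : (Fin n → L) → L, Monotone f → IsPolynomialFn L n f

/-- The three possible comparison types between distinct blocks of a canonical family. -/
inductive CompType : Type
  | lt
  | gt
  | incomp

/-- The relation on `L` associated to a comparison type. -/
def CompType.rel {L : Type u} [PartialOrder L] : CompType → L → L → Prop
  | .lt, a, b => a < b
  | .gt, a, b => b < a
  | .incomp, a, b => ¬ a ≤ b ∧ ¬ b ≤ a

/-- A family of subsets of `L` is canonical if each member is uniform, all members are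
of the same type, and comparison between elements of distinct members depends only on
the pair of indices. -/
def IsCanonical {L : Type u} [PartialOrder L] {ι : Type v} (A : ι → Set L) : Prop :=
  ((∀ i, IsAntichain (· ≤ ·) (A i)) ∨ (∀ i, IsWellChain (A i)) ∨ (∀ i, IsCoWellChain (A i))) ∧
  ∃ F : ι → ι → CompType, ∀ i j, i ≠ j → ∀ a ∈ A i, ∀ b ∈ A j, (F i j).rel a b


section TreeOrder
variable {L : Type u} {C : Type u} (r : L → L → Prop) [IsWellOrder L r] (c : L → L → C)

/-- The end-homogeneous tree order attached to a colouring. -/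
noncomputable def treeRel : L → L → Prop :=
  (IsWellFounded.wf (r := r)).fix (C := fun _ => L → Prop)
    (fun y ih x => r y x ∧ ∀ z, ∀ h : r z y, ih z h y → c z y = c z x)

theorem treeRel_iff' (y x : L) :
    treeRel r c y x ↔ r y x ∧ ∀ z, r z y → treeRel r c z y → c z y = c z x := by
  unfold treeRel
  rw [WellFounded.fix_eq]

theorem treeRel_r {y x : L} (h : treeRel r c y x) : r y x :=
  ((treeRel_iff' r c y x).1 h).1

theorem treeRel_iff (y x : L) :
    treeRel r c y x ↔ r y x ∧ ∀ z, treeRel r c z y → c z y = c z x := by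
  rw [treeRel_iff']
  exact ⟨fun h => ⟨h.1, fun z hz => h.2 z (treeRel_r r c hz) hz⟩,
    fun h => ⟨h.1, fun z _ hz => h.2 z hz⟩⟩

theorem treeRel_color {z y x : L} (h : treeRel r c z y) (h' : treeRel r c y x) :
    c z y = c z x := ((treeRel_iff r c y x).1 h').2 z h

theorem treeRel_trans (z : L) : ∀ y x : L, treeRel r c z y → treeRel r c y x →
    treeRel r c z x := by
  induction z using (IsWellFounded.wf (r := r)).induction with
  | _ z ih =>
    intro y x h h'
    refine (treeRel_iff r c z x).2 ⟨_root_.trans (treeRel_r r c h) (treeRel_r r c h'), ?_⟩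
    intro w hw
    rw [treeRel_color r c hw h,
      treeRel_color r c (ih w (treeRel_r r c hw) z y hw h) h']

theorem treeRel_linear (y : L) : ∀ y' x : L, treeRel r c y x → treeRel r c y' x → r y y' →
    treeRel r c y y' := by
  induction y using (IsWellFounded.wf (r := r)).induction with
  | _ y ih =>
    intro y' x h h' hr
    refine (treeRel_iff r c y y').2 ⟨hr, fun z hz => ?_⟩
    have hzr := treeRel_r r c hz
    have hzx := treeRel_trans r c z y x hz h
    have hzy' := ih z hzr y' x hzx h' (_root_.trans hzr hr)
    rw [treeRel_color r c hz h, treeRel_color r c hzy' h']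

theorem treeRel_ext {x x' : L} (h : ∀ z, treeRel r c z x ↔ treeRel r c z x')
    (hc : ∀ z, treeRel r c z x → c z x = c z x') : x = x' := by
  rcases trichotomous_of r x x' with hr | hr | hr
  · have : treeRel r c x x' := (treeRel_iff r c x x').2 ⟨hr, hc⟩
    exact absurd (treeRel_r r c ((h x).2 this)) (irrefl x)
  · exact hr
  · have : treeRel r c x' x :=
      (treeRel_iff r c x' x).2 ⟨hr, fun z hz => (hc z ((h z).2 hz)).symm⟩
    exact absurd (treeRel_r r c ((h x').1 this)) (irrefl x')

instance treeRel_wf : IsWellFounded L (treeRel r c) :=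
  ⟨Subrelation.wf (fun h => treeRel_r r c h) (IsWellFounded.wf (r := r))⟩

/-- The height in the tree. -/
noncomputable def treeRank (x : L) : Ordinal.{u} := IsWellFounded.rank (treeRel r c) x

theorem treeRank_lt {y x : L} (h : treeRel r c y x) : treeRank r c y < treeRank r c x :=
  IsWellFounded.rank_lt_of_rel h

theorem treeRank_surj (x : L) : ∀ a < treeRank r c x, ∃ w, treeRel r c w x ∧
    treeRank r c w = a := by
  induction x using (IsWellFounded.wf (r := treeRel r c)).induction with
  | _ x ih =>
    intro a ha
    by_contra hne
    push Not at hne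
    refine absurd ha (not_lt.2 ?_)
    unfold treeRank
    rw [IsWellFounded.rank_eq]
    refine Ordinal.iSup_le fun ⟨b, hb⟩ => ?_
    refine Order.succ_le_of_lt ?_
    by_contra hlt
    rcases (not_lt.1 hlt).lt_or_eq with h1 | h1
    · obtain ⟨w, hw, hwa⟩ := ih b hb a h1
      exact hne w (treeRel_trans r c w b x hw hb) hwa
    · exact hne b hb h1.symm

theorem treeRank_card_le (x : L) : (treeRank r c x).card ≤ #{y | treeRel r c y x} := by
  rw [← Cardinal.lift_le.{u+1}, ← Cardinal.mk_Iio_ordinal]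
  have hs : Set.Iio (treeRank r c x) ⊆ treeRank r c '' {y | treeRel r c y x} :=
    fun a ha => treeRank_surj r c x a ha
  refine (Cardinal.mk_le_mk_of_subset hs).trans ?_
  have := Cardinal.mk_image_le_lift (f := treeRank r c) (s := {y | treeRel r c y x})
  rwa [Cardinal.lift_id'.{u, u+1}] at this

/-- The code of a point. -/
def treeCode (x : L) : Set (Ordinal.{u} × C) :=
  {p | ∃ z, treeRel r c z x ∧ treeRank r c z = p.1 ∧ c z x = p.2}

theorem treeCode_restrict {z x : L} (h : treeRel r c z x) :
    treeCode r c z = {p | p ∈ treeCode r c x ∧ p.1 < treeRank r c z} := by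
  ext ⟨a, k⟩
  constructor
  · rintro ⟨w, hw, rfl, rfl⟩
    exact ⟨⟨w, treeRel_trans r c w z x hw h, rfl, (treeRel_color r c hw h).symm⟩,
      treeRank_lt r c hw⟩
  · rintro ⟨⟨w, hw, h1, h2⟩, hlt⟩
    simp only at h1 h2 hlt
    subst h1 h2
    have hwz : treeRel r c w z := by
      rcases trichotomous_of r w z with hr | hr | hr
      · exact treeRel_linear r c w z x hw h hr
      · subst hr; exact absurd hlt (lt_irrefl _)
      · exact absurd (treeRank_lt r c (treeRel_linear r c z w x h hw hr)) hlt.not_gt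
    exact ⟨w, hwz, rfl, treeRel_color r c hwz h⟩

theorem treeCode_inj (x : L) : ∀ x', treeCode r c x = treeCode r c x' → x = x' := by
  induction x using (IsWellFounded.wf (r := r)).induction with
  | _ x ih =>
    intro x' he
    have key : ∀ z z', treeRel r c z x → treeRel r c z' x' →
        treeRank r c z = treeRank r c z' → z = z' := by
      intro z z' hz hz' hk
      refine ih z (treeRel_r r c hz) z' ?_
      rw [treeCode_restrict r c hz, treeCode_restrict r c hz', he, hk]
    have h1 : ∀ z, treeRel r c z x → treeRel r c z x' ∧ c z x = c z x' := by
      intro z hz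
      have hm : (treeRank r c z, c z x) ∈ treeCode r c x := ⟨z, hz, rfl, rfl⟩
      rw [he] at hm
      obtain ⟨z', hz', hk, hc⟩ := hm
      have := key z z' hz hz' hk.symm
      subst this
      exact ⟨hz', hc.symm⟩
    have h2 : ∀ z, treeRel r c z x' → treeRel r c z x := by
      intro z' hz'
      have hm : (treeRank r c z', c z' x') ∈ treeCode r c x' := ⟨z', hz', rfl, rfl⟩
      rw [← he] at hm
      obtain ⟨z, hz, hk, hc⟩ := hm
      have := key z z' hz hz' hk
      subst this
      exact hz
    exact treeRel_ext r c (fun z => ⟨fun h => (h1 z h).1, h2 z⟩) (fun z h => (h1 z h).2)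

theorem tree_card_le (k : Cardinal.{u}) (hk : ∀ x, #{y | treeRel r c y x} < k) :
    #L ≤ 2 ^ (k * #C) := by
  let f : L → Set (Set.Iio k.ord × C) := fun x => {p | (p.1.1, p.2) ∈ treeCode r c x}
  have hf : Function.Injective f := by
    intro x x' he
    refine treeCode_inj r c x x' ?_
    have hlt : ∀ z, treeRank r c z < k.ord := fun z =>
      Cardinal.lt_ord.2 ((treeRank_card_le r c z).trans_lt (hk z))
    ext ⟨a, b⟩
    constructor
    · intro h
      have ha : a < k.ord := by
        obtain ⟨z, -, hz, -⟩ := h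
        exact lt_of_eq_of_lt hz.symm (hlt z)
      have : ((⟨a, ha⟩, b) : Set.Iio k.ord × C) ∈ f x := h
      rw [he] at this
      exact this
    · intro h
      have ha : a < k.ord := by
        obtain ⟨z, -, hz, -⟩ := h
        exact lt_of_eq_of_lt hz.symm (hlt z)
      have : ((⟨a, ha⟩, b) : Set.Iio k.ord × C) ∈ f x' := h
      rw [← he] at this
      exact this
  have := Cardinal.mk_le_of_injective
    (f := fun x : ULift.{u+1} L => f x.down) (fun a b h => ULift.down_injective (hf h))
  rw [← Cardinal.lift_le.{u+1}]
  simpa [Cardinal.mk_Iio_ordinal, Cardinal.mk_set, Cardinal.mk_prod] using this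

end TreeOrder

theorem IsUniform.subset {L : Type u} [PartialOrder L] {A B : Set L} (hA : IsUniform A)
    (h : B ⊆ A) : IsUniform B := by
  rcases hA with hA | hA | hA
  · exact Or.inl (hA.subset h)
  · exact Or.inr (Or.inl ⟨hA.1.mono h, hA.2.subset h⟩)
  · exact Or.inr (Or.inr ⟨hA.1.mono h, hA.2.subset h⟩)

theorem IsUniform.mk_lt {L : Type u} [PartialOrder L] {A : Set L} (hA : IsUniform A) :
    #A < mu L := by
  by_contra hlt
  have hne : {m : Cardinal.{u} | ¬ ∃ A : Set L, IsUniform A ∧ #A = m}.Nonempty := by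
    refine ⟨Order.succ #L, ?_⟩
    rintro ⟨A, -, hA⟩
    exact absurd (Cardinal.mk_set_le A) (by rw [hA]; exact (Order.lt_succ _).not_ge)
  have hm : ¬ ∃ A : Set L, IsUniform A ∧ #A = mu L := csInf_mem hne
  obtain ⟨B, hB, hBc⟩ := Cardinal.le_mk_iff_exists_subset.1 (not_lt.1 hlt)
  exact hm ⟨B, hA.subset hB, hBc⟩

/-- The colour of a pair. -/
def pairColor {L : Type u} [PartialOrder L] (a b : L) : ULift.{u} (Prop × Prop) :=
  ⟨(a < b, b < a)⟩

theorem pairColor_pred {L : Type u} [PartialOrder L] (x : L) :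
    ∃ A B D : Set L, IsUniform A ∧ IsUniform B ∧ IsUniform D ∧
      {y | treeRel (WellOrderingRel (α := L)) pairColor y x} ⊆ A ∪ B ∪ D := by
  set T := treeRel (WellOrderingRel (α := L)) pairColor with hT
  have hlin : ∀ {a b}, T a x → T b x → WellOrderingRel a b →
      ((a < b ↔ a < x) ∧ (b < a ↔ x < a)) := by
    intro a b ha hb hr
    have h := treeRel_color _ _ (treeRel_linear _ _ a b x ha hb hr) hb
    simp only [pairColor, ULift.up_inj, Prod.mk.injEq, eq_iff_iff] at h
    exact h
  have hwf : WellFounded (WellOrderingRel (α := L)) := IsWellFounded.wf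
  refine ⟨{y | T y x ∧ y < x}, {y | T y x ∧ x < y}, {y | T y x ∧ ¬ y < x ∧ ¬ x < y},
    Or.inr (Or.inl ⟨?_, ?_⟩), Or.inr (Or.inr ⟨?_, ?_⟩), Or.inl ?_, ?_⟩
  · rintro a ⟨ha, ha'⟩ b ⟨hb, hb'⟩ hne
    rcases trichotomous_of WellOrderingRel a b with hr | hr | hr
    · exact Or.inl ((hlin ha hb hr).1.2 ha').le
    · exact absurd hr hne
    · exact Or.inr ((hlin hb ha hr).1.2 hb').le
  · refine Subrelation.wf (r := fun a b => WellOrderingRel a.1 b.1) ?_ (InvImage.wf Subtype.val hwf)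
    rintro ⟨a, ha, ha'⟩ ⟨b, hb, hb'⟩ hab
    have hab : a < b := hab
    rcases trichotomous_of WellOrderingRel a b with hr | hr | hr
    · exact hr
    · exact absurd hr hab.ne
    · exact absurd ((hlin hb ha hr).1.2 hb') hab.not_gt
  · rintro a ⟨ha, ha'⟩ b ⟨hb, hb'⟩ hne
    rcases trichotomous_of WellOrderingRel a b with hr | hr | hr
    · exact Or.inr ((hlin ha hb hr).2.2 ha').le
    · exact absurd hr hne
    · exact Or.inl ((hlin hb ha hr).2.2 hb').le
  · refine Subrelation.wf (r := fun a b => WellOrderingRel a.1 b.1) ?_ (InvImage.wf Subtype.val hwf)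
    rintro ⟨a, ha, ha'⟩ ⟨b, hb, hb'⟩ hab
    have hab : b < a := hab
    rcases trichotomous_of WellOrderingRel a b with hr | hr | hr
    · exact hr
    · exact absurd hr hab.ne'
    · exact absurd ((hlin hb ha hr).2.2 hb') hab.not_gt
  · rintro a ⟨ha, ha1, ha2⟩ b ⟨hb, hb1, hb2⟩ hne hab
    have hab : a < b := lt_of_le_of_ne hab hne
    rcases trichotomous_of WellOrderingRel a b with hr | hr | hr
    · exact ha1 ((hlin ha hb hr).1.1 hab)
    · exact hne hr
    · exact hb2 ((hlin hb ha hr).2.1 hab)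
  · intro y hy
    have hy : T y x := hy
    by_cases h1 : y < x
    · exact Or.inl (Or.inl ⟨hy, h1⟩)
    · by_cases h2 : x < y
      · exact Or.inl (Or.inr ⟨hy, h2⟩)
      · exact Or.inr ⟨hy, h1, h2⟩

/-- For every infinite partial order `L`, `|L| ≤ 2^{μ(L)}`. -/
theorem card_le_two_pow_mu (L : Type u) [PartialOrder L] [Infinite L] :
    #L ≤ 2 ^ mu L := by
  have hle : ∀ x : L, ∃ a b d : Cardinal.{u}, a < mu L ∧ b < mu L ∧ d < mu L ∧
      #{y | treeRel (WellOrderingRel (α := L)) pairColor y x} ≤ a + b + d := by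
    intro x
    obtain ⟨A, B, D, hA, hB, hD, hs⟩ := pairColor_pred x
    refine ⟨_, _, _, hA.mk_lt, hB.mk_lt, hD.mk_lt, (Cardinal.mk_le_mk_of_subset hs).trans ?_⟩
    exact (Cardinal.mk_union_le _ _).trans (by gcongr; exact Cardinal.mk_union_le _ _)
  have hfin : #(ULift.{u} (Prop × Prop)) < ℵ₀ := Cardinal.lt_aleph0_of_finite _
  rcases lt_or_ge (mu L) ℵ₀ with hmu | hmu
  · exfalso
    have hk := tree_card_le (WellOrderingRel (α := L)) pairColor
      (mu L + mu L + mu L + 1) (fun x => by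
        obtain ⟨a, b, d, ha, hb, hd, h⟩ := hle x
        refine (h.trans (add_le_add (add_le_add ha.le hb.le) hd.le)).trans_lt ?_
        obtain ⟨n, hn⟩ := Cardinal.lt_aleph0.1 hmu
        rw [hn]
        exact_mod_cast Nat.lt_succ_self (n + n + n))
    refine absurd (Cardinal.aleph0_le_mk L) (not_le.2 (hk.trans_lt ?_))
    refine Cardinal.power_lt_aleph0 (Cardinal.nat_lt_aleph0 2) (Cardinal.mul_lt_aleph0 ?_ hfin)
    exact Cardinal.add_lt_aleph0 (Cardinal.add_lt_aleph0 (Cardinal.add_lt_aleph0 hmu hmu) hmu)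
      Cardinal.one_lt_aleph0
  · have hk := tree_card_le (WellOrderingRel (α := L)) pairColor (mu L) (fun x => by
        obtain ⟨a, b, d, ha, hb, hd, h⟩ := hle x
        exact h.trans_lt (Cardinal.add_lt_of_lt hmu (Cardinal.add_lt_of_lt hmu ha hb) hd))
    rwa [Cardinal.mul_eq_left hmu (hfin.le.trans hmu) (by simp)] at hk
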